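/- Let F : ℝ^d → ℝ^d be four times continuously differentiable, and let y : ℝ → ℝ^d solve the autonomous ODE y'(t) = F(y(t)) with y(0) = y₀. For Δt > 0 define the two-stage update: y* = y₀ + (Δt/2)·F(y₀) + (Δt²/8)·DF(y₀)(F(y₀)) and y¹ = y₀ + Δt·F(y₀) + (Δt²/6)·(DF(y₀)(F(y₀)) + 2·DF(y*)(F(y*))), where DF denotes the Fréchet derivative of F. Then ‖y¹ − y(Δt)‖ = O(Δt⁵) as Δt → 0⁺; that is, the two-stage method has fourth-order local truncation error. -/

import Mathlib

open Topology Filter Asymptotics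

lemma isBigO_integrate {E : Type*} [NormedAddCommGroup E] [NormedSpace ℝ E]
    {f f' : ℝ → E} (n : ℕ) (h0 : f 0 = 0) (hf : ∀ t, HasDerivAt f (f' t) t)
    (h : f' =O[𝓝 (0 : ℝ)] (fun t => t ^ n)) : f =O[𝓝 (0 : ℝ)] (fun t => t ^ (n + 1)) := by
  obtain ⟨C, hC⟩ := h.bound
  obtain ⟨ε, hε, hball⟩ := Metric.eventually_nhds_iff.1 hC
  refine IsBigO.of_bound C ?_
  refine Metric.eventually_nhds_iff.2 ⟨ε, hε, fun {t} ht => ?_⟩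
  have hC' : ∀ s ∈ Metric.closedBall (0 : ℝ) |t|, ‖f' s‖ ≤ C * |t| ^ n := by
    intro s hs
    have hs' : |s| ≤ |t| := by simpa using hs
    have ht' : |t| < ε := by simpa using ht
    have h1 := hball (y := s) (by simpa using lt_of_le_of_lt hs' ht')
    have h2 := hball (y := t) ht
    rw [norm_pow, Real.norm_eq_abs] at h1 h2
    by_cases hn : |s| ^ n = 0
    · rw [hn, mul_zero] at h1
      exact h1.trans ((norm_nonneg _).trans h2)
    · have hpos : 0 < |s| ^ n := lt_of_le_of_ne (by positivity) (Ne.symm hn)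
      have hCn : 0 ≤ C := by
        by_contra hneg
        push Not at hneg
        nlinarith [norm_nonneg (f' s)]
      exact h1.trans (by gcongr)
  have := (convex_closedBall (0 : ℝ) |t|).norm_image_sub_le_of_norm_hasDerivWithin_le
    (f := f) (f' := f') (fun x _ => (hf x).hasDerivWithinAt) hC'
    (x := 0) (y := t) (by simp) (by simp)
  rw [h0, sub_zero, sub_zero] at this
  rw [norm_pow, Real.norm_eq_abs, pow_succ, ← mul_assoc]
  simpa using this

/-- Fourth-order local truncation error of the two-stage method: for the
autonomous ODE `y' = F(y)`, `y(0) = y₀`, with `F` four times continuously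
differentiable, the two-stage update
`y* = y₀ + (Δt/2)F(y₀) + (Δt²/8)DF(y₀)(F(y₀))`,
`y¹ = y₀ + Δt F(y₀) + (Δt²/6)(DF(y₀)(F(y₀)) + 2 DF(y*)(F(y*)))`
satisfies `‖y¹ − y(Δt)‖ = O(Δt⁵)` as `Δt → 0⁺`. -/
theorem two_stage_fourth_order_local_truncation_error
    (d : ℕ) (F : EuclideanSpace ℝ (Fin d) → EuclideanSpace ℝ (Fin d))
    (hF : ContDiff ℝ 4 F)
    (y : ℝ → EuclideanSpace ℝ (Fin d)) (y₀ : EuclideanSpace ℝ (Fin d))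
    (hy : ∀ t : ℝ, HasDerivAt y (F (y t)) t) (hy₀ : y 0 = y₀) :
    (fun Δt : ℝ =>
        (y₀ + Δt • F y₀ + (Δt ^ 2 / 6) •
            (fderiv ℝ F y₀ (F y₀) + (2 : ℝ) •
              (fderiv ℝ F (y₀ + (Δt / 2) • F y₀ + (Δt ^ 2 / 8) • fderiv ℝ F y₀ (F y₀))
                (F (y₀ + (Δt / 2) • F y₀ + (Δt ^ 2 / 8) • fderiv ℝ F y₀ (F y₀))))))
          - y Δt)
      =O[𝓝[>] (0 : ℝ)] (fun Δt => Δt ^ 5) := by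
  subst hy₀
  set G : EuclideanSpace ℝ (Fin d) → EuclideanSpace ℝ (Fin d) :=
    fun x => fderiv ℝ F x (F x) with hG
  have hG3 : ContDiff ℝ 3 G :=
    (hF.fderiv_right (m := 3) (by norm_num)).clm_apply (hF.of_le (by norm_num))
  have hder : deriv y = fun t => F (y t) := funext fun t => (hy t).deriv
  have hdiff : Differentiable ℝ y := fun t => (hy t).differentiableAt
  have y0 : ContDiff ℝ 0 y := contDiff_zero.2 hdiff.continuous
  have y1 : ContDiff ℝ (0 + 1) y := contDiff_succ_iff_deriv.2
    ⟨hdiff, by simp, by rw [hder]; exact (hF.of_le (by norm_num)).comp y0⟩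
  have y2 : ContDiff ℝ (1 + 1) y := contDiff_succ_iff_deriv.2
    ⟨hdiff, by simp, by rw [hder]; exact (hF.of_le (by norm_num)).comp (y1.of_le (by norm_num))⟩
  have y3 : ContDiff ℝ (2 + 1) y := contDiff_succ_iff_deriv.2
    ⟨hdiff, by simp, by rw [hder]; exact (hF.of_le (by norm_num)).comp (y2.of_le (by norm_num))⟩
  have hg3 : ContDiff ℝ (2 + 1) (fun t => G (y t)) :=
    (hG3.of_le (by norm_num)).comp y3
  set g : ℝ → EuclideanSpace ℝ (Fin d) := fun t => G (y t) with hg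
  have hg2 : ContDiff ℝ (1 + 1) (deriv g) :=
    (contDiff_succ_iff_deriv.1 hg3).2.2.of_le (by norm_num)
  have hg1 : ContDiff ℝ 1 (deriv (deriv g)) := (contDiff_succ_iff_deriv.1 hg2).2.2
  have dg : ∀ t, HasDerivAt g (deriv g t) t := fun t =>
    ((contDiff_succ_iff_deriv.1 hg3).1 t).hasDerivAt
  have dg1 : ∀ t, HasDerivAt (deriv g) (deriv (deriv g) t) t := fun t =>
    ((contDiff_succ_iff_deriv.1 hg2).1 t).hasDerivAt
  have dF : ∀ t, HasDerivAt (fun t => F (y t)) (g t) t := fun t =>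
    ((hF.differentiable (by norm_num)) (y t)).hasFDerivAt.comp_hasDerivAt t (hy t)
  -- derivative facts for monomials
  have dp : ∀ (n : ℕ) (c : ℝ) (v : EuclideanSpace ℝ (Fin d)) (t : ℝ),
      HasDerivAt (fun t : ℝ => (c * t ^ (n + 1)) • v) ((c * ((n + 1) * t ^ n)) • v) t := by
    intro n c v t
    have := ((hasDerivAt_pow (n + 1) t).const_mul c).smul_const v
    simpa using this
  set a := F (y 0) with ha
  set b := deriv g 0 with hb
  set c := deriv (deriv g) 0 with hc
  -- expansions of g
  have e0 : (fun t => deriv (deriv g) t - c) =O[𝓝 (0 : ℝ)] (fun t => t ^ 1) := by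
    have := ((hg1.differentiable (by norm_num)) 0).isBigO_sub
    simpa using this
  have e1 : (fun t => deriv g t - b - (1 * t ^ (0 + 1)) • c) =O[𝓝 (0 : ℝ)] (fun t => t ^ 2) := by
    refine isBigO_integrate 1 (by simp [hb]) (fun t => ((dg1 t).sub_const b).sub (dp 0 1 c t)) ?_
    simpa using e0
  have e2 : (fun t => g t - g 0 - (1 * t ^ (0 + 1)) • b - ((1/2) * t ^ (1 + 1)) • c)
      =O[𝓝 (0 : ℝ)] (fun t => t ^ 3) := by
    refine isBigO_integrate 2 (by simp)
      (fun t => (((dg t).sub_const (g 0)).sub (dp 0 1 b t)).sub (dp 1 (1/2) c t)) ?_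
    refine e1.congr_left fun t => ?_
    module
  have e3 : (fun t => F (y t) - a - (1 * t ^ (0 + 1)) • g 0 - ((1/2) * t ^ (1 + 1)) • b
        - ((1/6) * t ^ (2 + 1)) • c)
      =O[𝓝 (0 : ℝ)] (fun t => t ^ 4) := by
    refine isBigO_integrate 3 (by simp [ha])
      (fun t => ((((dF t).sub_const a).sub (dp 0 1 (g 0) t)).sub
        (dp 1 (1/2) b t)).sub (dp 2 (1/6) c t)) ?_
    refine e2.congr_left fun t => ?_
    push_cast
    module
  have e4 : (fun t => y t - y 0 - (1 * t ^ (0 + 1)) • a - ((1/2) * t ^ (1 + 1)) • g 0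
        - ((1/6) * t ^ (2 + 1)) • b - ((1/24) * t ^ (3 + 1)) • c)
      =O[𝓝 (0 : ℝ)] (fun t => t ^ 5) := by
    refine isBigO_integrate 4 (by simp)
      (fun t => (((((hy t).sub_const (y 0)).sub (dp 0 1 a t)).sub
        (dp 1 (1/2) (g 0) t)).sub (dp 2 (1/6) b t)).sub (dp 3 (1/24) c t)) ?_
    refine e3.congr_left fun t => ?_
    push_cast
    module
  -- short expansion of y
  have f0 : (fun t => g t - g 0) =O[𝓝 (0 : ℝ)] (fun t => t ^ 1) := by
    have := (dg 0).differentiableAt.isBigO_sub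
    simpa using this
  have f1 : (fun t => F (y t) - a - (1 * t ^ (0 + 1)) • g 0) =O[𝓝 (0 : ℝ)] (fun t => t ^ 2) := by
    refine isBigO_integrate 1 (by simp [ha])
      (fun t => ((dF t).sub_const a).sub (dp 0 1 (g 0) t)) ?_
    simpa using f0
  have f2 : (fun t => y t - y 0 - (1 * t ^ (0 + 1)) • a - ((1/2) * t ^ (1 + 1)) • g 0)
      =O[𝓝 (0 : ℝ)] (fun t => t ^ 3) := by
    refine isBigO_integrate 2 (by simp)
      (fun t => (((hy t).sub_const (y 0)).sub (dp 0 1 a t)).sub (dp 1 (1/2) (g 0) t)) ?_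
    refine f1.congr_left fun t => ?_
    module
  have half : Tendsto (fun t : ℝ => t / 2) (𝓝 0) (𝓝 0) := by
    have : Continuous (fun t : ℝ => t / 2) := by fun_prop
    simpa using this.tendsto 0
  have halfO : ∀ n : ℕ, (fun t : ℝ => (t / 2) ^ n) =O[𝓝 (0 : ℝ)] (fun t => t ^ n) := by
    intro n
    refine IsBigO.pow ?_ n
    simpa [div_eq_inv_mul] using (isBigO_refl (fun t : ℝ => t) (𝓝 0)).const_mul_left (2⁻¹)
  have e2h := (e2.comp_tendsto half).trans (halfO 3)
  have f2h := (f2.comp_tendsto half).trans (halfO 3)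
  set z : ℝ → EuclideanSpace ℝ (Fin d) :=
    fun t => y 0 + (t / 2) • a + (t ^ 2 / 8) • g 0 with hz
  have hzy : (fun t => z t - y (t / 2)) =O[𝓝 (0 : ℝ)] (fun t => t ^ 3) := by
    refine f2h.neg_left.congr_left fun t => ?_
    simp only [hz, Function.comp]
    module
  have zt : Tendsto z (𝓝 0) (𝓝 (y 0)) := by
    have : Continuous z := by fun_prop
    simpa [hz] using this.tendsto 0
  have yt : Tendsto (fun t => y (t / 2)) (𝓝 0) (𝓝 (y 0)) :=
    (hdiff.continuous.tendsto 0).comp half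
  have hGz : (fun t => G (z t) - g (t / 2)) =O[𝓝 (0 : ℝ)] (fun t => t ^ 3) := by
    have hs := (hG3.contDiffAt (x := y 0)).hasStrictFDerivAt (by norm_num)
    exact (hs.isBigO_sub.comp_tendsto (zt.prodMk_nhds yt)).trans hzy
  have m1 : (fun t : ℝ => (t ^ 2 / 3) • (G (z t) - g (t / 2))) =O[𝓝 (0 : ℝ)]
      (fun t => t ^ 5) := by
    have h2 : (fun t : ℝ => t ^ 2 / 3) =O[𝓝 (0 : ℝ)] (fun t => t ^ 2) := by
      simpa [div_eq_inv_mul] using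
        (isBigO_refl (fun t : ℝ => t ^ 2) (𝓝 0)).const_mul_left (3⁻¹)
    exact (h2.smul hGz).congr_right fun t => by simp only [smul_eq_mul]; ring
  have m2 := by
    have h2 : (fun t : ℝ => t ^ 2 / 3) =O[𝓝 (0 : ℝ)] (fun t => t ^ 2) := by
      simpa [div_eq_inv_mul] using
        (isBigO_refl (fun t : ℝ => t ^ 2) (𝓝 0)).const_mul_left (3⁻¹)
    exact (h2.smul e2h).congr_right (g₂ := fun t => t ^ 5) fun t => by
      simp only [smul_eq_mul]; ring
  refine IsBigO.mono ?_ nhdsWithin_le_nhds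
  refine ((m1.add m2).sub e4).congr_left fun t => ?_
  change _ = y 0 + t • a + (t ^ 2 / 6) • (g 0 + (2 : ℝ) • G (z t)) - y t
  simp only [Function.comp]
  module
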